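/- Suppose U ∈ V_{ρ^(m)}, with m-sum structure U(x₁,…,x_N) = Σ_{1≤i₁<⋯<i_m≤N} u(x_{i₁},…,x_{i_m}) a.e., satisfies ρ_U^(m) = ρ^(m) a.e. on Λ^m. Then F_P(V) ≤ F_P(U) for every V ∈ V_{ρ^(m)}. Consequently, if U₀, U₁ ∈ V_{ρ^(m)} (with generators u₀, u₁) both satisfy ρ_{U₀}^(m) = ρ_{U₁}^(m) = ρ^(m) a.e., then U₁ − U₀ is equal a.e. on Λ^N to a real constant, and u₁ − u₀ is equal a.e. on Λ^m to a real constant. -/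

import Mathlib

open MeasureTheory Real Filter
open scoped ENNReal

noncomputable section

variable {Λ : Type*} [MeasurableSpace Λ]

/-- The product measure on `Λ^k` (the `k`-fold product of `μ`). -/
def pm (μ : Measure Λ) (k : ℕ) : Measure (Fin k → Λ) := Measure.pi fun _ => μ

/-- A function on `Λ^k` is symmetric if it is invariant under all permutations
of its variables. -/
def IsSymm' {Λ : Type*} (k : ℕ) (f : (Fin k → Λ) → ℝ) : Prop :=
  ∀ σ : Equiv.Perm (Fin k), ∀ x, f (x ∘ σ) = f x

/-- The `m`-sum `Σ_{1 ≤ i₁ < ⋯ < i_m ≤ N} v(x_{i₁},…,x_{i_m})`. -/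
def mSum {Λ : Type*} (N m : ℕ) (v : (Fin m → Λ) → ℝ) (x : Fin N → Λ) : ℝ :=
  ∑ s ∈ Finset.powersetCard m (Finset.univ : Finset (Fin N)),
    if h : s.card = m then v (fun i => x (s.orderEmbOfFin h i)) else 0

/-- `V` has `m`-sum structure with (symmetric, measurable, real-valued) generator `v`. -/
def HasSumStruct (μ : Measure Λ) (N m : ℕ) (V : (Fin N → Λ) → ℝ)
    (v : (Fin m → Λ) → ℝ) : Prop :=
  IsSymm' m v ∧ Measurable v ∧ V =ᵐ[pm μ N] mSum N m v

/-- The measure `P d^N x`. -/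
def Pmeas (μ : Measure Λ) (N : ℕ) (P : (Fin N → Λ) → ℝ) : Measure (Fin N → Λ) :=
  (pm μ N).withDensity fun x => ENNReal.ofReal (P x)

/-- The measure `e^{-W} d^N x`. -/
def Wmeas (μ : Measure Λ) (N : ℕ) (W : (Fin N → Λ) → ℝ) : Measure (Fin N → Λ) :=
  (pm μ N).withDensity fun x => ENNReal.ofReal (Real.exp (-(W x)))

/-- The partition function `Z(V) = ∫ e^{-V-W} d^N x`, as an extended nonnegative real. -/
def ZE (μ : Measure Λ) (N : ℕ) (W V : (Fin N → Λ) → ℝ) : ℝ≥0∞ :=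
  ∫⁻ x, ENNReal.ofReal (Real.exp (-(V x) - W x)) ∂(pm μ N)

/-- The partition function `Z(V)` as a real number. -/
def Zfun (μ : Measure Λ) (N : ℕ) (W V : (Fin N → Λ) → ℝ) : ℝ :=
  (ZE μ N W V).toReal

/-- The functional `F_P(V) = exp(-∫ V P d^N x) / Z(V)`. -/
def FP (μ : Measure Λ) (N : ℕ) (P W V : (Fin N → Λ) → ℝ) : ℝ :=
  Real.exp (-∫ x, V x ∂(Pmeas μ N P)) / Zfun μ N W V

/-- Membership in the set `V_P`. -/
def memVP (μ : Measure Λ) (N m : ℕ) (P W V : (Fin N → Λ) → ℝ) : Prop :=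
  Integrable V (Pmeas μ N P) ∧
  Integrable (fun x => Real.exp (-(V x))) (Wmeas μ N W) ∧
  ∃ v, HasSumStruct μ N m V v

/-- Gluing `(y, z) ∈ Λ^m × Λ^{N-m}` into a point of `Λ^N`. -/
def glue {Λ : Type*} {N m : ℕ} (h : m ≤ N) (y : Fin m → Λ) (z : Fin (N - m) → Λ) :
    Fin N → Λ :=
  fun i => Fin.append y z (Fin.cast (by omega) i)

/-- The `m`-particle reduction `ρ^{(m)}` of `P`. -/
def rho (μ : Measure Λ) (N m : ℕ) (h : m ≤ N) (P : (Fin N → Λ) → ℝ)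
    (y : Fin m → Λ) : ℝ :=
  ∫ z, P (glue h y z) ∂(pm μ (N - m))

/-- The measure `ρ^{(m)} d^m x`. -/
def rhomeas (μ : Measure Λ) (N m : ℕ) (h : m ≤ N) (P : (Fin N → Λ) → ℝ) :
    Measure (Fin m → Λ) :=
  (pm μ m).withDensity fun y => ENNReal.ofReal (rho μ N m h P y)

/-- Membership in the set `V_{ρ^{(m)}}`. -/
def memVrho (μ : Measure Λ) (N m : ℕ) (h : m ≤ N) (P W V : (Fin N → Λ) → ℝ) : Prop :=
  Integrable (fun x => Real.exp (-(V x))) (Wmeas μ N W) ∧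
  ∃ v, HasSumStruct μ N m V v ∧ Integrable v (rhomeas μ N m h P)

/-- The `m`-particle density `ρ_U^{(m)}` associated with the potential `U`. -/
def rhoU (μ : Measure Λ) (N m : ℕ) (h : m ≤ N) (W U : (Fin N → Λ) → ℝ)
    (y : Fin m → Λ) : ℝ :=
  (∫ z, Real.exp (-(W (glue h y z)) - U (glue h y z)) ∂(pm μ (N - m))) / Zfun μ N W U


section ProductMeasure

instance instSigmaFinitePm (μ : Measure Λ) [SigmaFinite μ] (k : ℕ) : SigmaFinite (pm μ k) := by
  unfold pm; infer_instance

lemma pm_ne_zero (μ : Measure Λ) [SigmaFinite μ] (hμ : μ ≠ 0) (k : ℕ) : pm μ k ≠ 0 := by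
  intro h
  have h1 : pm μ k Set.univ = 0 := by simp [h]
  simp [pm, Measure.pi_univ, hμ] at h1

lemma glue_castLE {Λ : Type*} {N m : ℕ} (h : m ≤ N) (y : Fin m → Λ) (z : Fin (N - m) → Λ) :
    glue h y z ∘ Fin.castLE h = y := by
  funext i
  have : (Fin.cast (by omega) (Fin.castLE h i) : Fin (m + (N - m))) = Fin.castAdd (N - m) i := by
    ext; simp
  simp [glue, this]

lemma measurable_comp_index {k n : ℕ} (f : Fin k → Fin n) :
    Measurable fun x : Fin n → Λ => x ∘ f :=
  measurable_pi_lambda _ fun i => measurable_pi_apply (f i)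

lemma measurePreserving_glue (μ : Measure Λ) [SigmaFinite μ] {N m : ℕ} (h : m ≤ N) :
    MeasurePreserving (fun p : (Fin m → Λ) × (Fin (N - m) → Λ) => glue h p.1 p.2)
      ((pm μ m).prod (pm μ (N - m))) (pm μ N) := by
  have hadd : m + (N - m) = N := by omega
  have hmeas : Measurable fun p : (Fin m → Λ) × (Fin (N - m) → Λ) => glue h p.1 p.2 := by
    refine measurable_pi_lambda _ fun i => ?_
    obtain ⟨j, rfl⟩ : ∃ j : Fin (m + (N - m)), Fin.cast hadd j = i := ⟨Fin.cast hadd.symm i, by simp⟩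
    refine Fin.addCases (fun j => ?_) (fun j => ?_) j
    · simpa [glue, Function.comp_def] using (measurable_pi_apply j).comp measurable_fst
    · simpa [glue, Function.comp_def] using (measurable_pi_apply j).comp measurable_snd
  refine ⟨hmeas, (Measure.pi_eq fun s hs => ?_).symm⟩
  rw [Measure.map_apply hmeas (MeasurableSet.univ_pi hs)]
  have hpre : (fun p : (Fin m → Λ) × (Fin (N - m) → Λ) => glue h p.1 p.2) ⁻¹' (Set.univ.pi s) =
      (Set.univ.pi fun i : Fin m => s (Fin.cast hadd (Fin.castAdd _ i))) ×ˢ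
        (Set.univ.pi fun i : Fin (N - m) => s (Fin.cast hadd (Fin.natAdd _ i))) := by
    ext ⟨y, z⟩
    simp only [Set.mem_preimage, Set.mem_univ_pi, Set.mem_prod]
    constructor
    · intro H
      exact ⟨fun i => by simpa [glue] using H (Fin.cast hadd (Fin.castAdd _ i)),
        fun i => by simpa [glue] using H (Fin.cast hadd (Fin.natAdd _ i))⟩
    · rintro ⟨H1, H2⟩ i
      obtain ⟨j, rfl⟩ : ∃ j : Fin (m + (N - m)), Fin.cast hadd j = i :=
        ⟨Fin.cast hadd.symm i, by simp⟩
      refine Fin.addCases (fun j => ?_) (fun j => ?_) j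
      · simpa [glue] using H1 j
      · simpa [glue] using H2 j
  rw [hpre, Measure.prod_prod, pm, pm, Measure.pi_pi, Measure.pi_pi,
    ← Fin.prod_congr' (fun i => μ (s i)) hadd, Fin.prod_univ_add]

/-- Relabelling the variables by a permutation, as a measurable equivalence. -/
def permEquiv (Λ : Type*) [MeasurableSpace Λ] {N : ℕ} (σ : Equiv.Perm (Fin N)) :
    (Fin N → Λ) ≃ᵐ (Fin N → Λ) where
  toFun x := x ∘ σ
  invFun x := x ∘ σ.symm
  left_inv x := by ext; simp
  right_inv x := by ext; simp
  measurable_toFun := measurable_comp_index σ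
  measurable_invFun := measurable_comp_index σ.symm

lemma measurePreserving_permEquiv (μ : Measure Λ) [SigmaFinite μ] {N : ℕ}
    (σ : Equiv.Perm (Fin N)) : MeasurePreserving (permEquiv Λ σ) (pm μ N) (pm μ N) := by
  refine ⟨(permEquiv Λ σ).measurable, (Measure.pi_eq fun s hs => ?_).symm⟩
  rw [(permEquiv Λ σ).map_apply]
  have : permEquiv Λ σ ⁻¹' (Set.univ.pi s) = Set.univ.pi fun i => s (σ.symm i) := by
    ext x
    simp only [Set.mem_preimage, Set.mem_univ_pi]
    exact ⟨fun H i => by simpa [permEquiv] using H (σ.symm i),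
      fun H i => by simpa [permEquiv] using H (σ i)⟩
  rw [this, pm, Measure.pi_pi, Equiv.prod_comp σ.symm fun i => μ (s i)]

lemma quasiMeasurePreserving_castLE (μ : Measure Λ) [SigmaFinite μ] {N m : ℕ} (h : m ≤ N) :
    Measure.QuasiMeasurePreserving (fun x : Fin N → Λ => x ∘ Fin.castLE h)
      (pm μ N) (pm μ m) := by
  refine ⟨measurable_comp_index _, ?_⟩
  rw [← (measurePreserving_glue μ h).map_eq,
    Measure.map_map (measurable_comp_index _) (measurePreserving_glue μ h).measurable]
  have : ((fun x : Fin N → Λ => x ∘ Fin.castLE h) ∘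
      fun p : (Fin m → Λ) × (Fin (N - m) → Λ) => glue h p.1 p.2) = Prod.fst := by
    funext p; exact glue_castLE h p.1 p.2
  rw [this]
  exact Measure.quasiMeasurePreserving_fst.absolutelyContinuous

lemma exists_perm_comp_castLE {N m : ℕ} (h : m ≤ N) (f : Fin m → Fin N)
    (hf : Function.Injective f) : ∃ σ : Equiv.Perm (Fin N), σ ∘ Fin.castLE h = f := by
  obtain ⟨σ, hσ⟩ := Equiv.Perm.exists_extending_pair (Fin.castLE h) f
    (Fin.castLE_injective h) hf
  exact ⟨σ, funext hσ⟩

lemma quasiMeasurePreserving_comp_index (μ : Measure Λ) [SigmaFinite μ] {N m : ℕ}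
    (f : Fin m → Fin N) (hf : Function.Injective f) :
    Measure.QuasiMeasurePreserving (fun x : Fin N → Λ => x ∘ f) (pm μ N) (pm μ m) := by
  have h : m ≤ N := by simpa using Fintype.card_le_of_injective f hf
  obtain ⟨σ, rfl⟩ := exists_perm_comp_castLE h f hf
  exact (quasiMeasurePreserving_castLE μ h).comp
    (measurePreserving_permEquiv μ σ).quasiMeasurePreserving

lemma ae_of_ae_comp_castLE (μ : Measure Λ) [SigmaFinite μ] (hμ : μ ≠ 0) {N m : ℕ} (h : m ≤ N)
    {p : (Fin m → Λ) → Prop} (hp : ∀ᵐ x ∂pm μ N, p (x ∘ Fin.castLE h)) : ∀ᵐ y ∂pm μ m, p y := by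
  have h1 := Measure.ae_ae_of_ae_prod
    ((measurePreserving_glue μ h).quasiMeasurePreserving.ae hp)
  have : (ae (pm μ (N - m))).NeBot := ae_neBot.2 (pm_ne_zero μ hμ _)
  filter_upwards [h1] with y hy
  obtain ⟨z, hz⟩ := hy.exists
  simpa [glue_castLE] using hz

end ProductMeasure

section Marginals

variable {μ : Measure Λ} [SigmaFinite μ] {N m : ℕ}

lemma map_castLE_Pmeas (h : m ≤ N) {R : (Fin N → Λ) → ℝ} (hR : Integrable R (pm μ N))
    (hpos : 0 ≤ᵐ[pm μ N] R) :
    (Pmeas μ N R).map (fun x => x ∘ Fin.castLE h) = rhomeas μ N m h R := by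
  have hg := measurePreserving_glue μ h
  have hR' : Integrable (fun p : (Fin m → Λ) × (Fin (N - m) → Λ) => R (glue h p.1 p.2))
      ((pm μ m).prod (pm μ (N - m))) := hg.integrable_comp_of_integrable hR
  have hdens : (fun y => ENNReal.ofReal (rho μ N m h R y)) =ᵐ[pm μ m]
      fun y => ∫⁻ z, ENNReal.ofReal (R (glue h y z)) ∂pm μ (N - m) := by
    filter_upwards [hR'.prod_right_ae,
      Measure.ae_ae_of_ae_prod (hg.quasiMeasurePreserving.ae hpos)] with y hy hy'
    exact ofReal_integral_eq_lintegral_ofReal hy hy'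
  rw [rhomeas, withDensity_congr_ae hdens]
  ext A hA
  have hpre : MeasurableSet ((fun x : Fin N → Λ => x ∘ Fin.castLE h) ⁻¹' A) :=
    measurable_comp_index _ hA
  rw [Measure.map_apply (measurable_comp_index _) hA, Pmeas, withDensity_apply _ hpre,
    withDensity_apply _ hA, ← lintegral_indicator hpre, ← lintegral_indicator hA]
  have hmeas : AEMeasurable (((fun x : Fin N → Λ => x ∘ Fin.castLE h) ⁻¹' A).indicator
      fun x => ENNReal.ofReal (R x)) (pm μ N) :=
    hR.1.aemeasurable.ennreal_ofReal.indicator hpre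
  rw [← hg.map_eq] at hmeas ⊢
  rw [lintegral_map' hmeas hg.measurable.aemeasurable]
  refine (lintegral_prod _ (hmeas.comp_measurable hg.measurable)).trans ?_
  refine lintegral_congr fun y => ?_
  by_cases hy : y ∈ A
  · simp [Set.indicator, glue_castLE, hy]
  · simp [Set.indicator, glue_castLE, hy]

lemma map_perm_Pmeas {R : (Fin N → Λ) → ℝ} (σ : Equiv.Perm (Fin N))
    (hsymm : ∀ᵐ x ∂pm μ N, R (x ∘ σ) = R x) :
    (Pmeas μ N R).map (fun x => x ∘ σ) = Pmeas μ N R := by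
  ext A hA
  have hpre : MeasurableSet ((fun x : Fin N → Λ => x ∘ σ) ⁻¹' A) := measurable_comp_index _ hA
  rw [Measure.map_apply (measurable_comp_index _) hA, Pmeas, withDensity_apply _ hpre,
    withDensity_apply _ hA, ← (measurePreserving_permEquiv μ σ).setLIntegral_comp_preimage_emb
      (permEquiv Λ σ).measurableEmbedding _ A]
  refine lintegral_congr_ae (ae_restrict_of_ae ?_)
  filter_upwards [hsymm] with x hx
  exact congrArg ENNReal.ofReal hx.symm

lemma map_index_Pmeas (h : m ≤ N) {R : (Fin N → Λ) → ℝ} (hR : Integrable R (pm μ N))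
    (hpos : 0 ≤ᵐ[pm μ N] R)
    (hsymm : ∀ σ : Equiv.Perm (Fin N), ∀ᵐ x ∂pm μ N, R (x ∘ σ) = R x)
    (f : Fin m → Fin N) (hf : Function.Injective f) :
    (Pmeas μ N R).map (fun x => x ∘ f) = rhomeas μ N m h R := by
  obtain ⟨σ, rfl⟩ := exists_perm_comp_castLE h f hf
  rw [← map_castLE_Pmeas h hR hpos]
  conv_rhs => rw [← map_perm_Pmeas σ (hsymm σ)]
  rw [Measure.map_map (measurable_comp_index _) (measurable_comp_index _)]
  rfl

lemma integrable_mSum_and_integral (h : m ≤ N) {R : (Fin N → Λ) → ℝ} (hR : Integrable R (pm μ N))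
    (hpos : 0 ≤ᵐ[pm μ N] R)
    (hsymm : ∀ σ : Equiv.Perm (Fin N), ∀ᵐ x ∂pm μ N, R (x ∘ σ) = R x)
    {v : (Fin m → Λ) → ℝ} (hv : Integrable v (rhomeas μ N m h R)) :
    Integrable (mSum N m v) (Pmeas μ N R) ∧
      ∫ x, mSum N m v x ∂Pmeas μ N R = N.choose m * ∫ y, v y ∂rhomeas μ N m h R := by
  have key : ∀ s ∈ Finset.powersetCard m (Finset.univ : Finset (Fin N)),
      Integrable (fun x : Fin N → Λ =>
        if h : s.card = m then v (fun i => x (s.orderEmbOfFin h i)) else 0) (Pmeas μ N R) ∧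
      ∫ x, (if h : s.card = m then v (fun i => x (s.orderEmbOfFin h i)) else 0) ∂Pmeas μ N R
        = ∫ y, v y ∂rhomeas μ N m h R := by
    intro s hs
    have hc := (Finset.mem_powersetCard.1 hs).2
    simp only [hc, dite_true]
    have hmap := map_index_Pmeas h hR hpos hsymm (s.orderEmbOfFin hc)
      (s.orderEmbOfFin hc).injective
    rw [← hmap] at hv ⊢
    exact ⟨hv.comp_measurable (measurable_comp_index _),
      (integral_map (measurable_comp_index _).aemeasurable hv.1).symm⟩
  refine ⟨integrable_finsetSum _ fun s hs => (key s hs).1, ?_⟩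
  unfold mSum
  rw [integral_finsetSum _ fun s hs => (key s hs).1, Finset.sum_congr rfl fun s hs => (key s hs).2]
  simp

end Marginals

section SubsetSums

lemma eq_of_exchange {α : Type*} [DecidableEq α] (A : Finset α) (n : ℕ) (g : Finset α → ℝ)
    (hg : ∀ a ∈ A, ∀ b ∈ A, a ≠ b → ∀ S ⊆ (A.erase a).erase b, S.card = n →
      g (insert a S) = g (insert b S))
    (S T : Finset α) (hS : S ⊆ A) (hT : T ⊆ A) (hSc : S.card = n + 1) (hTc : T.card = n + 1) :
    g S = g T := by
  induction hk : (S \ T).card generalizing S with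
  | zero =>
    have hST : S ⊆ T := Finset.sdiff_eq_empty_iff_subset.1 (Finset.card_eq_zero.1 hk)
    rw [Finset.eq_of_subset_of_card_le hST (by omega)]
  | succ k ih =>
    obtain ⟨a, ha⟩ : (S \ T).Nonempty := Finset.card_pos.1 (by omega)
    have hTS : (T \ S).card = (S \ T).card := Finset.card_sdiff_comm (by omega)
    obtain ⟨b, hb⟩ : (T \ S).Nonempty := Finset.card_pos.1 (by omega)
    rw [Finset.mem_sdiff] at ha hb
    have hab : a ≠ b := fun h => hb.2 (h ▸ ha.1)
    have hbS : b ∉ S.erase a := fun h => hb.2 (Finset.mem_of_mem_erase h)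
    have hce : (S.erase a).card = n := by rw [Finset.card_erase_of_mem ha.1]; omega
    have hex := hg a (hS ha.1) b (hT hb.1) hab (S.erase a)
      (fun x hx => by
        have hx' := Finset.mem_erase.1 hx
        exact Finset.mem_erase.2 ⟨fun h => hbS (h ▸ hx), Finset.mem_erase.2 ⟨hx'.1, hS hx'.2⟩⟩) hce
    rw [Finset.insert_erase ha.1] at hex
    rw [hex]
    refine ih _ (Finset.insert_subset (hT hb.1) ((Finset.erase_subset _ _).trans hS))
      (by rw [Finset.card_insert_of_notMem hbS, hce]) ?_
    have : insert b (S.erase a) \ T = (S \ T).erase a := by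
      rw [Finset.insert_sdiff_of_mem _ hb.1, Finset.erase_sdiff_comm]
    rw [this, Finset.card_erase_of_mem (Finset.mem_sdiff.2 ha)]
    omega

/-- A function on the `m`-subsets of a large set whose sum over the `m`-subsets of every
`N`-subset vanishes is zero. -/
lemma eq_zero_of_sum_powersetCard_eq_zero {α : Type*} [DecidableEq α] (m : ℕ) :
    ∀ (N : ℕ) (A : Finset α) (g : Finset α → ℝ), m ≤ N → N + m ≤ A.card →
      (∀ T ⊆ A, T.card = N → ∑ S ∈ T.powersetCard m, g S = 0) →
      ∀ S ⊆ A, S.card = m → g S = 0 := by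
  induction m with
  | zero =>
    intro N A g _ hA H S _ hSc
    obtain ⟨T, hT, hTc⟩ := Finset.exists_subset_card_eq (show N ≤ A.card by omega)
    rw [Finset.card_eq_zero.1 hSc]
    simpa using H T hT hTc
  | succ n ih =>
    intro N A g hN hA H S hS hSc
    obtain ⟨K, rfl⟩ : ∃ K, N = K + 1 := ⟨N - 1, by omega⟩
    have hex : ∀ a ∈ A, ∀ b ∈ A, a ≠ b → ∀ S ⊆ (A.erase a).erase b, S.card = n →
        g (insert a S) = g (insert b S) := by
      intro a ha b hb hab S hS hSc
      refine sub_eq_zero.1 (ih K ((A.erase a).erase b) (fun S => g (insert a S) - g (insert b S))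
        (by omega) ?_ ?_ S hS hSc)
      · rw [Finset.card_erase_of_mem (Finset.mem_erase.2 ⟨hab.symm, hb⟩),
          Finset.card_erase_of_mem ha]
        omega
      · intro T hT hTc
        have hTA : T ⊆ A := hT.trans ((Finset.erase_subset _ _).trans (Finset.erase_subset _ _))
        have hsum : ∀ c ∈ A, c ∉ T →
            ∑ S ∈ T.powersetCard (n + 1), g S + ∑ S ∈ T.powersetCard n, g (insert c S) = 0 := by
          intro c hc hcT
          rw [← H (insert c T) (Finset.insert_subset hc hTA)
            (by rw [Finset.card_insert_of_notMem hcT, hTc]),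
            Finset.powersetCard_succ_insert hcT, Finset.sum_union, Finset.sum_image]
          · intro S₁ h₁ S₂ h₂ h
            have h₁' : c ∉ S₁ := fun h' => hcT ((Finset.mem_powersetCard.1 h₁).1 h')
            have h₂' : c ∉ S₂ := fun h' => hcT ((Finset.mem_powersetCard.1 h₂).1 h')
            rw [← Finset.erase_insert h₁', ← Finset.erase_insert h₂', h]
          · rw [Finset.disjoint_left]
            intro X hX hX'
            obtain ⟨Y, _, rfl⟩ := Finset.mem_image.1 hX'
            exact hcT ((Finset.mem_powersetCard.1 hX).1 (Finset.mem_insert_self _ _))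
        have h1 := hsum a ha fun h => by simpa using hT h
        have h2 := hsum b hb fun h => by simpa using hT h
        rw [Finset.sum_sub_distrib]
        linarith
    obtain ⟨T, hT, hTc⟩ := Finset.exists_subset_card_eq (show K + 1 ≤ A.card by omega)
    have h1 := H T hT hTc
    rw [Finset.sum_congr rfl fun S' hS' => eq_of_exchange A n g hex S' S
      ((Finset.mem_powersetCard.1 hS').1.trans hT) hS (Finset.mem_powersetCard.1 hS').2 hSc,
      Finset.sum_const, Finset.card_powersetCard, hTc, nsmul_eq_mul] at h1
    refine (mul_eq_zero.1 h1).resolve_left ?_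
    exact_mod_cast (Nat.choose_pos hN).ne'

/-- The value of `v` on the coordinates of `x` indexed by `s`, listed increasingly. -/
def subsetEval {Λ : Type*} {N : ℕ} (m : ℕ) (v : (Fin m → Λ) → ℝ) (x : Fin N → Λ)
    (s : Finset (Fin N)) : ℝ :=
  if h : s.card = m then v (fun i => x (s.orderEmbOfFin h i)) else 0

lemma subsetEval_of_enum {Λ : Type*} {N m : ℕ} {v : (Fin m → Λ) → ℝ} (hv : IsSymm' m v)
    (x : Fin N → Λ) (f : Fin m → Fin N) (hf : Function.Injective f) {s : Finset (Fin N)}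
    (hs : s.card = m) (hfs : ∀ i, f i ∈ s) : subsetEval m v x s = v (x ∘ f) := by
  have hex : ∀ i, ∃ j, s.orderEmbOfFin hs j = f i := fun i => by
    have : f i ∈ Set.range (s.orderEmbOfFin hs) := by
      rw [Finset.range_orderEmbOfFin]; exact hfs i
    exact this
  choose τ hτ using hex
  have hinj : Function.Injective τ := fun i j hij => hf (by rw [← hτ i, ← hτ j, hij])
  rw [subsetEval, dif_pos hs,
    ← hv (Equiv.ofBijective τ (Finite.injective_iff_bijective.1 hinj))]
  congr 1
  funext i
  simp [hτ]

lemma mSum_comp_embedding {Λ : Type*} {N M m : ℕ} {v : (Fin m → Λ) → ℝ} (hv : IsSymm' m v)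
    (x : Fin M → Λ) (f : Fin N ↪ Fin M) :
    mSum N m v (x ∘ f) =
      ∑ s ∈ Finset.powersetCard m (Finset.univ.map f), subsetEval m v x s := by
  rw [Finset.powersetCard_map, Finset.sum_map]
  refine Finset.sum_congr rfl fun s hs => ?_
  have hc := (Finset.mem_powersetCard.1 hs).2
  rw [dif_pos hc]
  refine (subsetEval_of_enum hv x (f ∘ s.orderEmbOfFin hc)
    (f.injective.comp (s.orderEmbOfFin hc).injective) ?_ fun i => ?_).symm
  · simpa [Finset.mapEmbedding_apply] using hc
  · simp [Finset.mapEmbedding_apply]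

lemma mSum_comp_perm {Λ : Type*} {N m : ℕ} {v : (Fin m → Λ) → ℝ} (hv : IsSymm' m v)
    (x : Fin N → Λ) (σ : Equiv.Perm (Fin N)) : mSum N m v (x ∘ σ) = mSum N m v x := by
  have h := mSum_comp_embedding hv x σ.toEmbedding
  rw [Finset.map_univ_equiv] at h
  exact h

lemma mSum_sub_const {Λ : Type*} {N m : ℕ} (v w : (Fin m → Λ) → ℝ) (c : ℝ) (x : Fin N → Λ) :
    mSum N m (fun y => v y - w y - c) x = mSum N m v x - mSum N m w x - N.choose m * c := by
  have : (N.choose m : ℝ) * c =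
      ∑ s ∈ Finset.powersetCard m (Finset.univ : Finset (Fin N)), c := by simp
  rw [this]
  unfold mSum
  rw [← Finset.sum_sub_distrib, ← Finset.sum_sub_distrib]
  refine Finset.sum_congr rfl fun s hs => ?_
  simp [(Finset.mem_powersetCard.1 hs).2]

/-- A symmetric generator whose `m`-sum vanishes almost everywhere vanishes almost everywhere. -/
lemma ae_eq_zero_of_mSum_ae_eq_zero (μ : Measure Λ) [SigmaFinite μ] (hμ : μ ≠ 0) {N m : ℕ}
    (h : m ≤ N) {v : (Fin m → Λ) → ℝ} (hv : IsSymm' m v)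
    (hsum : ∀ᵐ x ∂pm μ N, mSum N m v x = 0) : ∀ᵐ y ∂pm μ m, v y = 0 := by
  have hle : m ≤ N + m := by omega
  refine ae_of_ae_comp_castLE μ hμ hle ?_
  have hall : ∀ᵐ x ∂pm μ (N + m), ∀ f : Fin N ↪ Fin (N + m), mSum N m v (x ∘ f) = 0 :=
    ae_all_iff.2 fun f => (quasiMeasurePreserving_comp_index μ f f.injective).ae hsum
  filter_upwards [hall] with x hx
  rw [← subsetEval_of_enum hv x (Fin.castLE hle) (Fin.castLE_injective hle)
    (s := Finset.univ.map (Fin.castLEEmb hle)) (by simp) (by simp)]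
  refine eq_zero_of_sum_powersetCard_eq_zero m N Finset.univ (subsetEval m v x) h (by simp) ?_ _
    (Finset.subset_univ _) (by simp)
  intro T _ hT
  rw [← hx (T.orderEmbOfFin hT).toEmbedding, mSum_comp_embedding hv]
  simp

end SubsetSums

section Variational

variable {μ : Measure Λ} {N m : ℕ}

lemma integrable_boltzmann {W V : (Fin N → Λ) → ℝ} (hW : Measurable W)
    (hV : Integrable (fun x => Real.exp (-(V x))) (Wmeas μ N W)) :
    Integrable (fun x => Real.exp (-(V x) - W x)) (pm μ N) := by
  rw [Wmeas, integrable_withDensity_iff_integrable_smul₀' (by fun_prop) (by simp)] at hV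
  refine hV.congr (ae_of_all _ fun x => ?_)
  simp only [smul_eq_mul]
  rw [ENNReal.toReal_ofReal (Real.exp_pos _).le, ← Real.exp_add]
  ring_nf

lemma Zfun_eq_integral {W V : (Fin N → Λ) → ℝ}
    (hV : Integrable (fun x => Real.exp (-(V x) - W x)) (pm μ N)) :
    Zfun μ N W V = ∫ x, Real.exp (-(V x) - W x) ∂pm μ N :=
  (integral_eq_lintegral_of_nonneg_ae (ae_of_all _ fun _ => (Real.exp_pos _).le) hV.1).symm

lemma Zfun_pos [SigmaFinite μ] (hμ : μ ≠ 0) {W V : (Fin N → Λ) → ℝ}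
    (hV : Integrable (fun x => Real.exp (-(V x) - W x)) (pm μ N)) : 0 < Zfun μ N W V := by
  have : NeZero (pm μ N) := ⟨pm_ne_zero μ hμ N⟩
  rw [Zfun_eq_integral hV]
  exact integral_exp_pos hV

lemma Pmeas_absolutelyContinuous (R : (Fin N → Λ) → ℝ) : Pmeas μ N R ≪ pm μ N :=
  withDensity_absolutelyContinuous _ _

lemma integrable_and_integral_of_hasSumStruct [SigmaFinite μ] (h : m ≤ N)
    {R : (Fin N → Λ) → ℝ}
    (hR : Integrable R (pm μ N)) (hpos : 0 ≤ᵐ[pm μ N] R)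
    (hsymm : ∀ σ : Equiv.Perm (Fin N), ∀ᵐ x ∂pm μ N, R (x ∘ σ) = R x)
    {V : (Fin N → Λ) → ℝ} {v : (Fin m → Λ) → ℝ} (hV : HasSumStruct μ N m V v)
    (hv : Integrable v (rhomeas μ N m h R)) :
    Integrable V (Pmeas μ N R) ∧
      ∫ x, V x ∂Pmeas μ N R = N.choose m * ∫ y, v y ∂rhomeas μ N m h R := by
  have hae := (Pmeas_absolutelyContinuous (μ := μ) R).ae_eq hV.2.2
  obtain ⟨h1, h2⟩ := integrable_mSum_and_integral h hR hpos hsymm hv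
  exact ⟨h1.congr hae.symm, (integral_congr_ae hae).trans h2⟩

/-- If the Gibbs density of `U` has the same `m`-particle reduction as `P`, then `U` maximizes
`F_P`, and any other maximizer differs from `U` by a constant. -/
lemma FP_le_and_ae_const_of_eq [SigmaFinite μ] (hμ : μ ≠ 0) (h : m ≤ N) {P W : (Fin N → Λ) → ℝ}
    (hP : Integrable P (pm μ N)) (hPpos : 0 ≤ᵐ[pm μ N] P)
    (hPsymm : ∀ σ : Equiv.Perm (Fin N), ∀ᵐ x ∂pm μ N, P (x ∘ σ) = P x)
    (hW : Measurable W)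
    (hWsymm : ∀ σ : Equiv.Perm (Fin N), ∀ᵐ x ∂pm μ N, W (x ∘ σ) = W x)
    {U V : (Fin N → Λ) → ℝ} {u v : (Fin m → Λ) → ℝ}
    (hUint : Integrable (fun x => Real.exp (-(U x))) (Wmeas μ N W))
    (hVint : Integrable (fun x => Real.exp (-(V x))) (Wmeas μ N W))
    (hU : HasSumStruct μ N m U u) (hV : HasSumStruct μ N m V v)
    (hu : Integrable u (rhomeas μ N m h P)) (hv : Integrable v (rhomeas μ N m h P))
    (hsol : rhoU μ N m h W U =ᵐ[pm μ m] rho μ N m h P) :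
    FP μ N P W V ≤ FP μ N P W U ∧ (FP μ N P W V = FP μ N P W U →
      ∃ C : ℝ, (fun x => V x - U x) =ᵐ[pm μ N] fun _ => C) := by
  have hUB := integrable_boltzmann hW hUint
  have hVB := integrable_boltzmann hW hVint
  have hZU := Zfun_pos hμ hUB
  have hZV := Zfun_pos hμ hVB
  set Q : (Fin N → Λ) → ℝ := fun x => Real.exp (-(W x) - U x) / Zfun μ N W U with hQdef
  have hQpos : ∀ x, 0 < Q x := fun x => div_pos (Real.exp_pos _) hZU
  have hUB' : (fun x => Real.exp (-(U x) - W x)) = fun x => Real.exp (-(W x) - U x) := by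
    funext x; ring_nf
  have hQ : Integrable Q (pm μ N) := by
    rw [hUB'] at hUB
    exact hUB.div_const _
  have hQone : ∫ x, Q x ∂pm μ N = 1 := by
    rw [hQdef, integral_div, ← hUB', ← Zfun_eq_integral hUB, div_self hZU.ne']
  have hQsymm : ∀ σ : Equiv.Perm (Fin N), ∀ᵐ x ∂pm μ N, Q (x ∘ σ) = Q x := by
    intro σ
    filter_upwards [hWsymm σ, hU.2.2,
      (measurePreserving_permEquiv μ σ).quasiMeasurePreserving.ae hU.2.2] with x hx h1 h2
    have h2' : U (x ∘ σ) = mSum N m u (x ∘ σ) := h2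
    simp only [hQdef, hx, h1, h2', mSum_comp_perm hU.1]
  have hrho : rhomeas μ N m h Q = rhomeas μ N m h P := by
    refine withDensity_congr_ae ?_
    filter_upwards [hsol] with y hy
    rw [← hy, rhoU, ← integral_div]
    rfl
  have hQae : 0 ≤ᵐ[pm μ N] Q := ae_of_all _ fun x => (hQpos x).le
  have hprob : IsProbabilityMeasure (Pmeas μ N Q) := ⟨by
    rw [Pmeas, withDensity_apply _ MeasurableSet.univ, Measure.restrict_univ,
      ← ofReal_integral_eq_lintegral_ofReal hQ hQae, hQone, ENNReal.ofReal_one]⟩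
  have hac : pm μ N ≪ Pmeas μ N Q :=
    withDensity_absolutelyContinuous' hQ.1.aemeasurable.ennreal_ofReal
      (ae_of_all _ fun x => (ENNReal.ofReal_pos.2 (hQpos x)).ne')
  obtain ⟨hUQ, hUQ'⟩ := integrable_and_integral_of_hasSumStruct h hQ hQae hQsymm hU (hrho ▸ hu)
  obtain ⟨hVQ, hVQ'⟩ := integrable_and_integral_of_hasSumStruct h hQ hQae hQsymm hV (hrho ▸ hv)
  have hUP := (integrable_and_integral_of_hasSumStruct h hP hPpos hPsymm hU hu).2
  have hVP := (integrable_and_integral_of_hasSumStruct h hP hPpos hPsymm hV hv).2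
  rw [hrho] at hUQ' hVQ'
  have hD : Integrable (fun x => U x - V x) (Pmeas μ N Q) := hUQ.sub hVQ
  have hDint : ∫ x, (U x - V x) ∂Pmeas μ N Q =
      ∫ x, U x ∂Pmeas μ N P - ∫ x, V x ∂Pmeas μ N P := by
    rw [integral_sub hUQ hVQ, hUQ', hVQ', hUP, hVP]
  have hsmul : (fun x => (ENNReal.ofReal (Q x)).toReal • Real.exp (U x - V x)) =
      fun x => Real.exp (-(V x) - W x) / Zfun μ N W U := by
    funext x
    rw [ENNReal.toReal_ofReal (hQpos x).le, smul_eq_mul, hQdef, div_mul_eq_mul_div, ← Real.exp_add]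
    ring_nf
  have hEint : Integrable (fun x => Real.exp (U x - V x)) (Pmeas μ N Q) := by
    rw [Pmeas, integrable_withDensity_iff_integrable_smul₀' hQ.1.aemeasurable.ennreal_ofReal
      (by simp), hsmul]
    exact hVB.div_const _
  have hE : ∫ x, Real.exp (U x - V x) ∂Pmeas μ N Q = Zfun μ N W V / Zfun μ N W U := by
    rw [Pmeas, integral_withDensity_eq_integral_toReal_smul₀ hQ.1.aemeasurable.ennreal_ofReal
      (by simp), hsmul, integral_div, ← Zfun_eq_integral hVB]
  have hFP : FP μ N P W V = Real.exp (∫ x, (U x - V x) ∂Pmeas μ N Q) * FP μ N P W U *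
      (Zfun μ N W U / Zfun μ N W V) := by
    rw [hDint, FP, FP, Real.exp_sub, Real.exp_neg, Real.exp_neg]
    field_simp
  have hFU : 0 < FP μ N P W U := div_pos (Real.exp_pos _) hZU
  rcases strictConvexOn_exp.ae_eq_const_or_map_average_lt Real.continuous_exp.continuousOn
    isClosed_univ (by simp) hD hEint with hconst | hlt
  · rw [average_eq_integral] at hconst
    have hval : Real.exp (∫ x, (U x - V x) ∂Pmeas μ N Q) = Zfun μ N W V / Zfun μ N W U := by
      have hexp : (fun x => Real.exp (U x - V x)) =ᵐ[Pmeas μ N Q]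
          fun _ => Real.exp (∫ x, (U x - V x) ∂Pmeas μ N Q) :=
        hconst.fun_comp Real.exp
      rw [← hE, integral_congr_ae hexp]
      simp
    refine ⟨le_of_eq ?_, fun _ => ⟨-∫ x, (U x - V x) ∂Pmeas μ N Q, ?_⟩⟩
    · rw [hFP, hval]
      field_simp
    · filter_upwards [hac.ae_eq hconst] with x hx
      rw [Function.const_apply] at hx
      rw [← hx]
      ring
  · rw [average_eq_integral, average_eq_integral, hE] at hlt
    have hlt' : FP μ N P W V < FP μ N P W U := by
      rw [hFP]
      calc _ < Zfun μ N W V / Zfun μ N W U * FP μ N P W U * (Zfun μ N W U / Zfun μ N W V) := by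
            gcongr
        _ = FP μ N P W U := by field_simp
    exact ⟨hlt'.le, fun heq => absurd heq hlt'.ne⟩

end Variational

/-- If `U ∈ V_{ρ^{(m)}}` (with generator `u`) satisfies
`ρ_U^{(m)} = ρ^{(m)}` a.e., then `F_P(V) ≤ F_P(U)` for every `V ∈ V_{ρ^{(m)}}`.
Consequently, any two solutions `U₀, U₁ ∈ V_{ρ^{(m)}}` of the inverse problem differ
a.e. by a real constant, and so do their generators. -/
theorem statement16 (μ : Measure Λ) [SigmaFinite μ] (hμ : μ ≠ 0)
    (N m : ℕ) (hN : 2 ≤ N) (hm : 1 ≤ m) (hmN : m ≤ N)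
    (P W : (Fin N → Λ) → ℝ) (hPmeas : Measurable P)
    (hPprob : ∫⁻ x, ENNReal.ofReal (P x) ∂(pm μ N) = 1)
    (hPpos : ∀ᵐ x ∂(pm μ N), 0 < P x)
    (hPsymm : ∀ σ : Equiv.Perm (Fin N), ∀ᵐ x ∂(pm μ N), P (x ∘ σ) = P x)
    (hWmeas : Measurable W)
    (hWsymm : ∀ σ : Equiv.Perm (Fin N), ∀ᵐ x ∂(pm μ N), W (x ∘ σ) = W x)
    (U : (Fin N → Λ) → ℝ) (u : (Fin m → Λ) → ℝ)
    (hUint : Integrable (fun x => Real.exp (-(U x))) (Wmeas μ N W))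
    (hUstruct : HasSumStruct μ N m U u)
    (hu : Integrable u (rhomeas μ N m hmN P))
    (hUsol : rhoU μ N m hmN W U =ᵐ[pm μ m] rho μ N m hmN P) :
    (∀ V, memVrho μ N m hmN P W V → FP μ N P W V ≤ FP μ N P W U) ∧
    (∀ U₀ U₁ u₀ u₁,
        Integrable (fun x => Real.exp (-(U₀ x))) (Wmeas μ N W) →
        Integrable (fun x => Real.exp (-(U₁ x))) (Wmeas μ N W) →
        HasSumStruct μ N m U₀ u₀ → HasSumStruct μ N m U₁ u₁ →
        Integrable u₀ (rhomeas μ N m hmN P) → Integrable u₁ (rhomeas μ N m hmN P) →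
        rhoU μ N m hmN W U₀ =ᵐ[pm μ m] rho μ N m hmN P →
        rhoU μ N m hmN W U₁ =ᵐ[pm μ m] rho μ N m hmN P →
        (∃ C : ℝ, (fun x => U₁ x - U₀ x) =ᵐ[pm μ N] fun _ => C) ∧
        (∃ c : ℝ, (fun y => u₁ y - u₀ y) =ᵐ[pm μ m] fun _ => c)) := by
  have hPae : 0 ≤ᵐ[pm μ N] P := hPpos.mono fun _ hx => hx.le
  have hP : Integrable P (pm μ N) := by
    refine ⟨hPmeas.aestronglyMeasurable, ?_⟩
    rw [hasFiniteIntegral_iff_ofReal hPae, hPprob]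
    exact ENNReal.one_lt_top
  refine ⟨?_, ?_⟩
  · rintro V ⟨hVint, v, hV, hv⟩
    exact (FP_le_and_ae_const_of_eq hμ hmN hP hPae hPsymm hWmeas hWsymm hUint hVint hUstruct hV
      hu hv hUsol).1
  · intro U₀ U₁ u₀ u₁ hint₀ hint₁ hU₀ hU₁ hu₀ hu₁ hsol₀ hsol₁
    have h₀ := FP_le_and_ae_const_of_eq hμ hmN hP hPae hPsymm hWmeas hWsymm hint₀ hint₁ hU₀ hU₁
      hu₀ hu₁ hsol₀
    have h₁ := FP_le_and_ae_const_of_eq hμ hmN hP hPae hPsymm hWmeas hWsymm hint₁ hint₀ hU₁ hU₀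
      hu₁ hu₀ hsol₁
    obtain ⟨C, hC⟩ := h₀.2 (le_antisymm h₀.1 h₁.1)
    refine ⟨⟨C, hC⟩, C / N.choose m, ?_⟩
    have hchoose : (N.choose m : ℝ) ≠ 0 := by exact_mod_cast (Nat.choose_pos hmN).ne'
    have hzero := ae_eq_zero_of_mSum_ae_eq_zero μ hμ hmN
      (v := fun y => u₁ y - u₀ y - C / N.choose m)
      (fun σ y => by simp only [hU₁.1 σ y, hU₀.1 σ y]) (by
        filter_upwards [hC, hU₀.2.2, hU₁.2.2] with x hx hx₀ hx₁
        rw [mSum_sub_const, ← hx₀, ← hx₁, hx, mul_div_cancel₀ _ hchoose, sub_self])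
    filter_upwards [hzero] with y hy
    exact sub_eq_zero.1 hy

end
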